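/- arXiv:0712.2924 — 5 statements merged into one kernel-verified Lean document; each statement's English description precedes it below -/
import Mathlib

section
/- For every real number X with 0 ≤ X ≤ 1, every n : ℕ, every ψ ∈ H and every configuration α : Fin n → Bool, the norm-squared of the Kraus-string branch equals the double sum over quantum histories: ⟪K(α)ψ, K(α)ψ⟫ = ∑_{Φ : Fin n → Bool} ∑_{Φ' : Fin n → Bool} (X^(d(α,Φ)+d(α,Φ')) / (1+X^2)^n) • ⟪C(Φ)ψ, C(Φ')ψ⟫. (This is Lemma 1: the collapse-model decoherence functional D_c on a cylinder set equals the coupled decoherence functional D_qc coarse grained over all quantum histories.) -/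
open scoped InnerProductSpace

noncomputable section

/-- Ordered composition `A (n-1) ∘ₗ ⋯ ∘ₗ A 0` of a family of linear maps. -/
def opString {H : Type*} [NormedAddCommGroup H] [InnerProductSpace ℂ H] {n : ℕ}
    (A : Fin n → (H →ₗ[ℂ] H)) : H →ₗ[ℂ] H :=
  (List.finRange n).foldl (fun acc i => A i ∘ₗ acc) LinearMap.id

/-- Hamming distance: the number of indices on which two configurations differ. -/
def hamming {n : ℕ} (f g : Fin n → Bool) : ℕ :=
  (Finset.univ.filter fun i => f i ≠ g i).card

/-- The jump (Kraus) operator `J i b = (√(1+X²))⁻¹ • (P i b + X • P i (!b))`. -/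
def jumpOp {H : Type*} [NormedAddCommGroup H] [InnerProductSpace ℂ H] {n : ℕ}
    (X : ℝ) (P : Fin n → Bool → (H →ₗ[ℂ] H)) (i : Fin n) (b : Bool) : H →ₗ[ℂ] H :=
  (((Real.sqrt (1 + X ^ 2))⁻¹ : ℝ) : ℂ) • (P i b + (X : ℂ) • P i (!b))

/-- The Kraus string `K(α) = J (n-1) (α (n-1)) ∘ₗ R (n-1) ∘ₗ ⋯ ∘ₗ J 0 (α 0) ∘ₗ R 0`. -/
def krausString {H : Type*} [NormedAddCommGroup H] [InnerProductSpace ℂ H] {n : ℕ}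
    (X : ℝ) (R : Fin n → (H →ₗ[ℂ] H)) (P : Fin n → Bool → (H →ₗ[ℂ] H))
    (α : Fin n → Bool) : H →ₗ[ℂ] H :=
  opString fun i => jumpOp X P i (α i) ∘ₗ R i

/-- The class string `C(Φ) = P (n-1) (Φ (n-1)) ∘ₗ R (n-1) ∘ₗ ⋯ ∘ₗ P 0 (Φ 0) ∘ₗ R 0`. -/
def classString {H : Type*} [NormedAddCommGroup H] [InnerProductSpace ℂ H] {n : ℕ}
    (R : Fin n → (H →ₗ[ℂ] H)) (P : Fin n → Bool → (H →ₗ[ℂ] H))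
    (Φ : Fin n → Bool) : H →ₗ[ℂ] H :=
  opString fun i => P i (Φ i) ∘ₗ R i

theorem opString_succ {H : Type*} [NormedAddCommGroup H] [InnerProductSpace ℂ H] {n : ℕ}
    (A : Fin (n + 1) → (H →ₗ[ℂ] H)) :
    opString A = A (Fin.last n) ∘ₗ opString (fun i : Fin n => A i.castSucc) := by
  simp [opString, List.finRange_succ_last, List.foldl_append, List.foldl_map]

theorem opString_smul {H : Type*} [NormedAddCommGroup H] [InnerProductSpace ℂ H] {n : ℕ}
    (c : Fin n → ℂ) (A : Fin n → (H →ₗ[ℂ] H)) :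
    opString (fun i => c i • A i) = (∏ i, c i) • opString A := by
  induction n with
  | zero => simp [opString]
  | succ n ih =>
    rw [opString_succ, opString_succ, ih (fun i => c i.castSucc) (fun i => A i.castSucc),
      Fin.prod_univ_castSucc, LinearMap.smul_comp, LinearMap.comp_smul, smul_smul, mul_comm]

theorem opString_sum {H : Type*} [NormedAddCommGroup H] [InnerProductSpace ℂ H] {n : ℕ}
    (B : Fin n → Bool → (H →ₗ[ℂ] H)) :
    opString (fun i => ∑ b, B i b) = ∑ Φ : Fin n → Bool, opString (fun i => B i (Φ i)) := by
  induction n with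
  | zero => simp [opString]
  | succ n ih =>
    rw [opString_succ, ih (fun i => B i.castSucc),
      ← (Fin.snocEquiv (fun _ : Fin (n + 1) => Bool)).sum_comp, Fintype.sum_prod_type]
    ext x
    simp only [opString_succ, Fin.snocEquiv, Equiv.coe_fn_mk, Fin.snoc_last, Fin.snoc_castSucc,
      LinearMap.comp_apply, LinearMap.sum_apply, map_sum]
    rw [Finset.sum_comm]

theorem krausString_eq_sum {H : Type*} [NormedAddCommGroup H] [InnerProductSpace ℂ H] {n : ℕ}
    (X : ℝ) (R : Fin n → (H →ₗ[ℂ] H)) (P : Fin n → Bool → (H →ₗ[ℂ] H)) (α : Fin n → Bool) :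
    krausString X R P α = ∑ Φ : Fin n → Bool,
      ((((Real.sqrt (1 + X ^ 2))⁻¹ ^ n * X ^ hamming α Φ : ℝ)) : ℂ) • classString R P Φ := by
  have h : ∀ i, jumpOp X P i (α i) ∘ₗ R i = ∑ b, ((((Real.sqrt (1 + X ^ 2))⁻¹ : ℝ) : ℂ) *
      (if α i ≠ b then (X : ℂ) else 1)) • (P i b ∘ₗ R i) := by
    intro i
    ext x
    cases hα : α i <;> simp [jumpOp, add_comm, mul_smul]
  simp only [krausString, h, opString_sum]
  refine Finset.sum_congr rfl fun Φ _ => ?_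
  rw [opString_smul, classString, Finset.prod_mul_distrib, Finset.prod_ite]
  simp [hamming]

/-- Lemma 1: the collapse-model decoherence functional `D_c` on a cylinder set equals the
coupled decoherence functional `D_qc` coarse grained over all quantum histories. -/
theorem collapse_measure_eq_coarse_grained_quantum
    {H : Type*} [NormedAddCommGroup H] [InnerProductSpace ℂ H] [FiniteDimensional ℂ H]
    (n : ℕ) (X : ℝ) (hX0 : 0 ≤ X) (hX1 : X ≤ 1)
    (R : Fin n → (H →ₗ[ℂ] H)) (P : Fin n → Bool → (H →ₗ[ℂ] H))
    (ψ : H) (α : Fin n → Bool) :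
    ⟪krausString X R P α ψ, krausString X R P α ψ⟫_ℂ =
      ∑ Φ : Fin n → Bool, ∑ Φ' : Fin n → Bool,
        ((X ^ (hamming α Φ + hamming α Φ') / (1 + X ^ 2) ^ n : ℝ)) •
          ⟪classString R P Φ ψ, classString R P Φ' ψ⟫_ℂ := by
  have hs : (Real.sqrt (1 + X ^ 2))⁻¹ ^ n * (Real.sqrt (1 + X ^ 2))⁻¹ ^ n =
      ((1 + X ^ 2) ^ n)⁻¹ := by
    rw [← mul_pow, ← mul_inv, Real.mul_self_sqrt (by positivity), inv_pow]
  rw [krausString_eq_sum]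
  simp only [LinearMap.sum_apply, LinearMap.smul_apply, sum_inner, inner_sum]
  rw [Finset.sum_comm]
  refine Finset.sum_congr rfl fun Φ _ => Finset.sum_congr rfl fun Φ' _ => ?_
  rw [inner_smul_left, inner_smul_right, Complex.conj_ofReal, ← mul_assoc, ← Complex.ofReal_mul,
    Complex.real_smul]
  congr 2
  rw [div_eq_mul_inv, ← hs, pow_add]
  ring

end
end

section
/- For every real number X with 0 ≤ X ≤ 1, every n : ℕ and every configuration α : Fin n → Bool, the Kraus string expands as a weighted sum of class strings over all quantum histories: K(α) = ∑_{Φ : Fin n → Bool} (X^(d(α,Φ)) • ((Real.sqrt (1+X^2))⁻¹)^n : ℂ) • C(Φ), as an equality of linear maps H →ₗ[ℂ] H. (This is the expansion at the heart of the proof of Lemma 1: each jump operator is a linear combination of the two projections on its link, and expanding the product produces one term for each quantum field configuration, weighted by X to the power of its Hamming distance from the classical configuration.) -/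
open scoped InnerProductSpace

noncomputable section

theorem hamming_snoc {n : ℕ} (f : Fin (n + 1) → Bool) (g : Fin n → Bool) (b : Bool) :
    hamming f (Fin.snoc (α := fun _ => Bool) g b) =
      hamming (fun i : Fin n => f i.castSucc) g + (if f (Fin.last n) ≠ b then 1 else 0) := by
  simp only [hamming, Finset.card_filter, Fin.sum_univ_castSucc, Fin.snoc_castSucc, Fin.snoc_last]

theorem classString_snoc {H : Type*} [NormedAddCommGroup H] [InnerProductSpace ℂ H] {n : ℕ}
    (R : Fin (n + 1) → (H →ₗ[ℂ] H)) (P : Fin (n + 1) → Bool → (H →ₗ[ℂ] H))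
    (g : Fin n → Bool) (b : Bool) :
    classString R P (Fin.snoc (α := fun _ => Bool) g b) =
      (P (Fin.last n) b ∘ₗ R (Fin.last n)) ∘ₗ
        classString (fun i : Fin n => R i.castSucc) (fun i : Fin n => P i.castSucc) g := by
  simp only [classString, opString_succ, Fin.snoc_castSucc, Fin.snoc_last]

theorem jumpOp_eq_sum {H : Type*} [NormedAddCommGroup H] [InnerProductSpace ℂ H] {n : ℕ}
    (X : ℝ) (P : Fin n → Bool → (H →ₗ[ℂ] H)) (i : Fin n) (a : Bool) :
    jumpOp X P i a = ∑ b : Bool,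
      ((X ^ (if a ≠ b then 1 else 0) * (Real.sqrt (1 + X ^ 2))⁻¹ : ℝ) : ℂ) • P i b := by
  rw [Fintype.sum_bool, jumpOp, smul_add, smul_smul, ← Complex.ofReal_mul]
  cases a
  · rw [add_comm, if_pos (by decide), if_neg (by decide), pow_one, pow_zero, one_mul, mul_comm X]
    rfl
  · rw [if_neg (by decide), if_pos (by decide), pow_one, pow_zero, one_mul, mul_comm X]
    rfl

/-- The Kraus string expands as a weighted sum of class strings over all quantum histories,
with weight `X^{d(α,Φ)} (√(1+X²))⁻ⁿ` for each quantum history `Φ`. -/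
theorem krausString_eq_sum_classString
    {H : Type*} [NormedAddCommGroup H] [InnerProductSpace ℂ H] [FiniteDimensional ℂ H]
    (n : ℕ) (X : ℝ) (hX0 : 0 ≤ X) (hX1 : X ≤ 1)
    (R : Fin n → (H →ₗ[ℂ] H)) (P : Fin n → Bool → (H →ₗ[ℂ] H))
    (α : Fin n → Bool) :
    krausString X R P α =
      ∑ Φ : Fin n → Bool,
        ((X ^ hamming α Φ * ((Real.sqrt (1 + X ^ 2))⁻¹) ^ n : ℝ) : ℂ) •
          classString R P Φ := by
  clear hX0 hX1
  induction n with
  | zero =>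
    simp [krausString, classString, opString, hamming]
  | succ n ih =>
    have h1 : krausString X R P α = (jumpOp X P (Fin.last n) (α (Fin.last n)) ∘ₗ R (Fin.last n)) ∘ₗ
        krausString X (fun i : Fin n => R i.castSucc) (fun i : Fin n => P i.castSucc)
          (fun i : Fin n => α i.castSucc) := by
      simp only [krausString, opString_succ]
      rfl
    rw [h1, ih, jumpOp_eq_sum, ← (Fin.snocEquiv (fun _ : Fin (n + 1) => Bool)).sum_comp,
      Fintype.sum_prod_type]
    simp only [Fin.snocEquiv, Equiv.coe_fn_mk, hamming_snoc, classString_snoc]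
    ext v
    simp only [LinearMap.comp_apply, LinearMap.sum_apply, LinearMap.smul_apply, map_sum, map_smul,
      Finset.smul_sum, smul_smul]
    rw [Finset.sum_comm]
    refine Finset.sum_congr rfl fun b _ => Finset.sum_congr rfl fun g _ => ?_
    congr 1
    push_cast
    ring

end
end

section
/- In the environment model, for every Φ, E : Fin n → Bool the branch vector equals a product: S(Φ,E) Ψ₀ is the function sending E' : Fin n → Bool to (if E' = E then ((X^(d(Φ,E)) * ((Real.sqrt (1+X^2))⁻¹)^n : ℝ) : ℂ) • C(Φ)ψ₀ else 0), where C(Φ) := P (n-1) (Φ (n-1)) ∘ₗ R (n-1) ∘ₗ ⋯ ∘ₗ P 0 (Φ 0) ∘ₗ R 0 is the class string of the plain unitary field theory and d(Φ,E) is the Hamming distance. (This is the Claim proved in the appendix: the vector valued amplitude |Φⁿ,Eⁿ⟩ factorizes as X^(d(Φⁿ,Eⁿ))/(1+X²)^(n/2) times the unitary-theory branch |Φⁿ⟩ tensored with the environment basis state |Eⁿ⟩.) -/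
open scoped InnerProductSpace

noncomputable section

/-- The real 2×2 environment rotation matrices, indexed by `Bool` (`false` first; rows =
outgoing environment value, columns = incoming environment value):
`M false = (√(1+X²))⁻¹ • !![1, X; X, -1]` and `M true = (√(1+X²))⁻¹ • !![X, 1; 1, -X]`. -/
def envM (X : ℝ) (b e' e : Bool) : ℝ :=
  (Real.sqrt (1 + X ^ 2))⁻¹ *
    match b, e', e with
    | false, false, false => 1
    | false, false, true  => X
    | false, true,  false => X
    | false, true,  true  => -1
    | true,  false, false => X
    | true,  false, true  => 1
    | true,  true,  false => 1
    | true,  true,  true  => -X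

variable {H : Type*} [NormedAddCommGroup H] [InnerProductSpace ℂ H]

/-- The lifted elementary unitary evolution on the total space `(Fin n → Bool) → H`. -/
def Rhat {n : ℕ} (R : Fin n → (H →ₗ[ℂ] H)) (i : Fin n)
    (Ψ : (Fin n → Bool) → H) : (Fin n → Bool) → H :=
  fun E => R i (Ψ E)

/-- The lifted field projector on the total space. -/
def Phat {n : ℕ} (P : Fin n → Bool → (H →ₗ[ℂ] H)) (i : Fin n) (b : Bool)
    (Ψ : (Fin n → Bool) → H) : (Fin n → Bool) → H :=
  fun E => P i b (Ψ E)

/-- The environment projector on the total space. -/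
def Qhat {n : ℕ} (i : Fin n) (e : Bool)
    (Ψ : (Fin n → Bool) → H) : (Fin n → Bool) → H :=
  fun E => if E i = e then Ψ E else 0

/-- The partial measurement operator on the total space. -/
def Uhat {n : ℕ} (X : ℝ) (P : Fin n → Bool → (H →ₗ[ℂ] H)) (i : Fin n)
    (Ψ : (Fin n → Bool) → H) : (Fin n → Bool) → H :=
  fun E => ∑ b : Bool, ∑ e' : Bool,
    ((envM X b (E i) e' : ℝ) : ℂ) • P i b (Ψ (Function.update E i e'))

/-- The environment branch string
`S(Φ,E) = Q̂ (n-1) (E (n-1)) ∘ P̂ (n-1) (Φ (n-1)) ∘ Û (n-1) ∘ R̂ (n-1) ∘ ⋯ ∘ Q̂ 0 (E 0) ∘ P̂ 0 (Φ 0) ∘ Û 0 ∘ R̂ 0`. -/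
def envString {n : ℕ} (X : ℝ) (R : Fin n → (H →ₗ[ℂ] H))
    (P : Fin n → Bool → (H →ₗ[ℂ] H)) (Φ E : Fin n → Bool) :
    ((Fin n → Bool) → H) → ((Fin n → Bool) → H) :=
  (List.finRange n).foldl
    (fun acc i => Qhat i (E i) ∘ Phat P i (Φ i) ∘ Uhat X P i ∘ Rhat R i ∘ acc) id

/-- The initial state `Ψ₀`: the field state `ψ₀` tensored with the environment ground state. -/
def initState {n : ℕ} (ψ₀ : H) : (Fin n → Bool) → H :=
  fun E => if E = (fun _ => false) then ψ₀ else 0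

/-- Basis state: `v` tensored with the environment configuration `F`. -/
def basisState {n : ℕ} (F : Fin n → Bool) (v : H) : (Fin n → Bool) → H :=
  fun E' => if E' = F then v else 0

/-- The per-step scalar weight. -/
def stepCoeff (X : ℝ) (a b : Bool) : ℝ :=
  (if a ≠ b then X else 1) * (Real.sqrt (1 + X ^ 2))⁻¹

theorem foldl_comp_apply {α β : Type*} (A : β → α → α) (l : List β) (g : α → α) (x : α) :
    (l.foldl (fun acc i => A i ∘ acc) g) x = l.foldl (fun y i => A i y) (g x) := by
  induction l generalizing g with
  | nil => rfl
  | cons a l ih => simp [List.foldl_cons, ih]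

theorem foldl_lcomp_apply {β : Type*} (A : β → (H →ₗ[ℂ] H)) (l : List β)
    (g : H →ₗ[ℂ] H) (x : H) :
    (l.foldl (fun acc i => A i ∘ₗ acc) g) x = l.foldl (fun y i => A i y) (g x) := by
  induction l generalizing g with
  | nil => rfl
  | cons a l ih => simp [List.foldl_cons, ih]

theorem foldl_smul {β : Type*} (A : β → (H →ₗ[ℂ] H)) (l : List β) (c : ℂ) (x : H) :
    l.foldl (fun y i => A i y) (c • x) = c • l.foldl (fun y i => A i y) x := by
  induction l generalizing x with
  | nil => rfl
  | cons a l ih => simp [List.foldl_cons, ih]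

theorem proj_apply_proj (p : Bool → (H →ₗ[ℂ] H))
    (hsum : p false + p true = LinearMap.id) (hid : ∀ b, p b ∘ₗ p b = p b) (a b : Bool) (w : H) :
    p a (p b w) = if a = b then p a w else 0 := by
  have h1 : ∀ b w, p b (p b w) = p b w := fun b w => LinearMap.congr_fun (hid b) w
  have h2 : ∀ w, p false w + p true w = w := fun w => LinearMap.congr_fun hsum w
  cases a <;> cases b <;> simp only [h1, if_true, reduceCtorEq, if_false]
  · have := h2 (p true w)
    rw [h1] at this
    simpa using this
  · have := h2 (p false w)
    rw [h1] at this
    simpa using this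

theorem step_basisState {n : ℕ} (X : ℝ) (R : Fin n → (H →ₗ[ℂ] H))
    (P : Fin n → Bool → (H →ₗ[ℂ] H))
    (hPsum : ∀ i, P i false + P i true = LinearMap.id)
    (hPidem : ∀ i b, P i b ∘ₗ P i b = P i b)
    (i : Fin n) (a e : Bool) (F : Fin n → Bool) (hF : F i = false) (v : H) :
    Qhat i e (Phat P i a (Uhat X P i (Rhat R i (basisState F v)))) =
      basisState (Function.update F i e) ((stepCoeff X a e : ℂ) • P i a (R i v)) := by
  have key := proj_apply_proj (P i) (hPsum i) (hPidem i)
  have hu : ∀ (E' : Fin n → Bool) (b : Bool), Function.update E' i b = F ↔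
      b = false ∧ E' = Function.update F i (E' i) := by
    intro E' b
    constructor
    · rintro rfl
      simp at hF
      simp [hF]
    · rintro ⟨rfl, h⟩
      rw [h]
      simp [← hF]
  have hv : ∀ (E' : Fin n → Bool), E' = Function.update F i e ↔
      E' i = e ∧ E' = Function.update F i (E' i) := by
    intro E'
    constructor
    · intro h
      have h1 : E' i = e := by rw [h]; simp
      exact ⟨h1, by rw [h1]; exact h⟩
    · rintro ⟨rfl, h⟩
      exact h
  funext E'
  simp only [Qhat, Phat, Uhat, Rhat, basisState, hu, hv]
  by_cases h1 : E' i = e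
  · by_cases h2 : E' = Function.update F i (E' i)
    · simp only [if_pos h1, h1, ← h2, and_true, true_and]
      rw [h1] at h2
      rw [if_pos h2]
      cases a <;> cases e <;> simp [key, envM, stepCoeff, ← h2, mul_comm]
    · simp [h1, h1 ▸ h2]
  · simp [h1]

theorem foldl_basisState {n : ℕ} (X : ℝ) (R : Fin n → (H →ₗ[ℂ] H))
    (P : Fin n → Bool → (H →ₗ[ℂ] H))
    (hPsum : ∀ i, P i false + P i true = LinearMap.id)
    (hPidem : ∀ i b, P i b ∘ₗ P i b = P i b) (Φ E : Fin n → Bool)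
    (l : List (Fin n)) (hl : l.Nodup) (F : Fin n → Bool) (hF : ∀ i ∈ l, F i = false) (v : H) :
    l.foldl (fun Ψ i => Qhat i (E i) (Phat P i (Φ i) (Uhat X P i (Rhat R i Ψ))))
        (basisState F v) =
      basisState (fun j => if j ∈ l then E j else F j)
        ((((l.map fun i => stepCoeff X (Φ i) (E i)).prod : ℝ) : ℂ) •
          l.foldl (fun y i => (P i (Φ i) ∘ₗ R i) y) v) := by
  induction l generalizing F v with
  | nil => simp
  | cons a l ih =>
    rw [List.nodup_cons] at hl
    rw [List.foldl_cons, step_basisState X R P hPsum hPidem _ _ _ F (hF a (by simp)), ih hl.2,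
      foldl_smul]
    · congr 1
      · funext j
        by_cases hj : j = a
        · subst hj
          simp [hl.1]
        · simp [hj]
      · rw [smul_smul, List.map_cons, List.prod_cons, List.foldl_cons]
        push_cast
        rw [mul_comm]
        rfl
    · intro i hi
      have : i ≠ a := fun h => hl.1 (h ▸ hi)
      rw [Function.update_of_ne this]
      exact hF i (by simp [hi])

/-- The appendix Claim: the branch vector of the environment model factorizes as
`X^{d(Φ,E)} (√(1+X²))⁻ⁿ` times the unitary-theory branch `C(Φ)ψ₀` tensored with the
environment basis state `|E⟩`. -/
theorem envString_apply_initState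
    {H : Type*} [NormedAddCommGroup H] [InnerProductSpace ℂ H] [FiniteDimensional ℂ H]
    (n : ℕ) (X : ℝ) (hX0 : 0 ≤ X) (hX1 : X ≤ 1)
    (R : Fin n → (H →ₗ[ℂ] H)) (P : Fin n → Bool → (H →ₗ[ℂ] H))
    (hPsum : ∀ i, P i false + P i true = LinearMap.id)
    (hPidem : ∀ i b, P i b ∘ₗ P i b = P i b)
    (ψ₀ : H) (Φ E : Fin n → Bool) :
    envString X R P Φ E (initState ψ₀) =
      fun E' : Fin n → Bool =>
        if E' = E then
          ((X ^ hamming Φ E * ((Real.sqrt (1 + X ^ 2))⁻¹) ^ n : ℝ) : ℂ) •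
            classString R P Φ ψ₀
        else 0 := by
  have hc : ((List.finRange n).map fun i => stepCoeff X (Φ i) (E i)).prod =
      X ^ hamming Φ E * ((Real.sqrt (1 + X ^ 2))⁻¹) ^ n := by
    rw [← Fin.prod_univ_def]
    simp only [stepCoeff, Finset.prod_mul_distrib, hamming, Finset.prod_ite]
    simp
  have h0 : envString X R P Φ E (initState ψ₀) = (List.finRange n).foldl
      (fun Ψ i => Qhat i (E i) (Phat P i (Φ i) (Uhat X P i (Rhat R i Ψ))))
        (basisState (fun _ => false) ψ₀) :=
    foldl_comp_apply (fun i Ψ => Qhat i (E i) (Phat P i (Φ i) (Uhat X P i (Rhat R i Ψ)))) _ _ _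
  rw [h0, foldl_basisState X R P hPsum hPidem Φ E _ (List.nodup_finRange n) _ (by simp), hc]
  have h1 : classString R P Φ ψ₀ =
      (List.finRange n).foldl (fun y i => (P i (Φ i) ∘ₗ R i) y) ψ₀ :=
    foldl_lcomp_apply _ _ _ _
  rw [h1]
  simp only [List.mem_finRange, if_true]
  rfl

end
end

section
/- In the environment model, equip 𝓗 := (Fin n → Bool) → H with the inner product ⟪Ψ, Ψ'⟫ := ∑_{E : Fin n → Bool} ⟪Ψ E, Ψ' E⟫_H. Then for all Φ, Φ', E, E' : Fin n → Bool, ⟪S(Φ,E)Ψ₀, S(Φ',E')Ψ₀⟫ = (if E = E' then ((X^(d(Φ,E) + d(Φ',E')) / (1+X^2)^n : ℝ) : ℂ) * ⟪C(Φ)ψ₀, C(Φ')ψ₀⟫_H else 0), where C(Φ) := P (n-1) (Φ (n-1)) ∘ₗ R (n-1) ∘ₗ ⋯ ∘ₗ P 0 (Φ 0) ∘ₗ R 0 and d denotes Hamming distance. (This is Lemma 3: there is a unitary dynamics of the field coupled to a one-time-interaction environment whose decoherence functional D_qe equals the coupled decoherence functional D_qc of the collapse model, when environment histories are identified with classical histories.)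 -/
open scoped InnerProductSpace

noncomputable section

variable {H : Type*} [NormedAddCommGroup H] [InnerProductSpace ℂ H]

section helpers

lemma P_annihil (P : Bool → (H →ₗ[ℂ] H)) (hs : P false + P true = LinearMap.id)
    (hi : ∀ b, P b ∘ₗ P b = P b) (a b : Bool) (v : H) :
    P a (P b v) = if b = a then P a v else 0 := by
  have h1 : ∀ b v, P b (P b v) = P b v := fun b v => LinearMap.congr_fun (hi b) v
  have h2 : ∀ v, P false v + P true v = v := fun v => LinearMap.congr_fun hs v
  cases a <;> cases b
  · simp [h1]
  · have := h2 (P true v)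
    rw [h1] at this
    simpa using this
  · have := h2 (P false v)
    rw [h1] at this
    simpa using this
  · simp [h1]

lemma envM_zero (X : ℝ) (b e : Bool) :
    envM X b e false = (Real.sqrt (1 + X ^ 2))⁻¹ * (if b ≠ e then X else 1) := by
  cases b <;> cases e <;> simp [envM]

lemma step_eq {n : ℕ} (X : ℝ) (R : Fin n → (H →ₗ[ℂ] H)) (P : Fin n → Bool → (H →ₗ[ℂ] H))
    (hPsum : ∀ i, P i false + P i true = LinearMap.id)
    (hPidem : ∀ i b, P i b ∘ₗ P i b = P i b) (i : Fin n) (e b : Bool)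
    (G : Fin n → Bool) (hG : G i = false) (v : H) :
    Qhat i e (Phat P i b (Uhat X P i (Rhat R i (fun F => if F = G then v else 0)))) =
      fun F => if F = Function.update G i e then
        ((envM X b e false : ℝ) : ℂ) • P i b (R i v) else 0 := by
  funext F
  have hT : Function.update F i true ≠ G := by
    intro h
    have := congrFun h i
    simp [hG] at this
  have hF : (F = Function.update G i e) ↔ (F i = e ∧ Function.update F i false = G) := by
    constructor
    · rintro rfl
      refine ⟨by simp, ?_⟩
      rw [Function.update_idem, ← hG, Function.update_eq_self]
    · rintro ⟨rfl, rfl⟩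
      simp
  simp only [Qhat, Phat, Uhat, Rhat, hF, Fintype.sum_bool, hT]
  by_cases h1 : F i = e <;> by_cases h2 : Function.update F i false = G <;>
    simp [h1, h2, P_annihil (P i) (hPsum i) (hPidem i)]
  cases b <;> simp

lemma fold_eq {n : ℕ} (X : ℝ) (R : Fin n → (H →ₗ[ℂ] H)) (P : Fin n → Bool → (H →ₗ[ℂ] H))
    (hPsum : ∀ i, P i false + P i true = LinearMap.id)
    (hPidem : ∀ i b, P i b ∘ₗ P i b = P i b) (ψ₀ : H) (Φ E : Fin n → Bool)
    (l : List (Fin n)) (hl : l.Nodup) :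
    (l.foldl (fun acc i => Qhat i (E i) ∘ Phat P i (Φ i) ∘ Uhat X P i ∘ Rhat R i ∘ acc) id)
        (initState ψ₀) =
      fun F => if F = (fun j => if j ∈ l then E j else false) then
        (((l.map fun i => envM X (Φ i) (E i) false).prod : ℝ) : ℂ) •
          (l.foldl (fun acc i => (P i (Φ i) ∘ₗ R i) ∘ₗ acc) LinearMap.id) ψ₀ else 0 := by
  induction l using List.reverseRecOn with
  | nil =>
    funext F
    simp [initState]
  | append_singleton l i ih =>
    have hl' : l.Nodup ∧ i ∉ l := by
      rw [List.nodup_append] at hl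
      refine ⟨hl.1, fun h => ?_⟩
      exact hl.2.2 i h i (by simp) rfl
    rw [List.foldl_append]
    simp only [List.foldl_cons, List.foldl_nil, Function.comp_apply]
    rw [ih hl'.1, step_eq X R P hPsum hPidem i _ _ _ (by simp [hl'.2])]
    have hG : Function.update (fun j => if j ∈ l then E j else false) i (E i) =
        fun j => if j ∈ l ++ [i] then E j else false := by
      funext j
      by_cases h : j = i
      · subst h; simp
      · simp [h]
    rw [hG]
    funext F
    congr 1
    simp only [List.foldl_append, List.foldl_cons, List.foldl_nil, List.map_append, List.map_cons,
      List.map_nil, List.prod_append, List.prod_singleton, map_smul, smul_smul,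
      LinearMap.comp_apply, Complex.ofReal_mul]
    rw [mul_comm]

lemma env_eq {n : ℕ} (X : ℝ) (R : Fin n → (H →ₗ[ℂ] H)) (P : Fin n → Bool → (H →ₗ[ℂ] H))
    (hPsum : ∀ i, P i false + P i true = LinearMap.id)
    (hPidem : ∀ i b, P i b ∘ₗ P i b = P i b) (ψ₀ : H) (Φ E F : Fin n → Bool) :
    envString X R P Φ E (initState ψ₀) F =
      if F = E then
        ((((Real.sqrt (1 + X ^ 2))⁻¹ ^ n * X ^ hamming Φ E : ℝ)) : ℂ) •
          classString R P Φ ψ₀ else 0 := by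
  have h := congrFun (fold_eq X R P hPsum hPidem ψ₀ Φ E _ (List.nodup_finRange n)) F
  rw [envString, h, ← Fin.prod_univ_def]
  simp only [List.mem_finRange, if_true, envM_zero, Finset.prod_mul_distrib, Finset.prod_const,
    Finset.card_univ, Fintype.card_fin, Finset.prod_ite, one_pow, mul_one]
  rfl

end helpers

/-- Lemma 3: the decoherence functional `D_qe` of the unitary field-plus-environment model
(with inner product `⟪Ψ, Ψ'⟫ = ∑_E ⟪Ψ E, Ψ' E⟫` on the total space) equals the coupled
decoherence functional `D_qc` of the collapse model when environment histories are identified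
with classical histories. -/
theorem env_decoherence_functional_eq_coupled
    {H : Type*} [NormedAddCommGroup H] [InnerProductSpace ℂ H] [FiniteDimensional ℂ H]
    (n : ℕ) (X : ℝ) (hX0 : 0 ≤ X) (hX1 : X ≤ 1)
    (R : Fin n → (H →ₗ[ℂ] H)) (P : Fin n → Bool → (H →ₗ[ℂ] H))
    (hPsum : ∀ i, P i false + P i true = LinearMap.id)
    (hPidem : ∀ i b, P i b ∘ₗ P i b = P i b)
    (ψ₀ : H) (Φ Φ' E E' : Fin n → Bool) :
    ∑ F : Fin n → Bool,
        ⟪envString X R P Φ E (initState ψ₀) F, envString X R P Φ' E' (initState ψ₀) F⟫_ℂ =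
      if E = E' then
        ((X ^ (hamming Φ E + hamming Φ' E') / (1 + X ^ 2) ^ n : ℝ) : ℂ) *
          ⟪classString R P Φ ψ₀, classString R P Φ' ψ₀⟫_ℂ
      else 0 := by
  have hs : (Real.sqrt (1 + X ^ 2))⁻¹ ^ n * (Real.sqrt (1 + X ^ 2))⁻¹ ^ n =
      ((1 + X ^ 2) ^ n)⁻¹ := by
    rw [← mul_pow, ← mul_inv, Real.mul_self_sqrt (by positivity), inv_pow]
  simp only [env_eq X R P hPsum hPidem]
  by_cases hE : E = E'
  · subst hE
    rw [Finset.sum_eq_single E (fun F _ hF => by simp [hF]) (by simp)]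
    simp only [if_true]
    rw [inner_smul_left, inner_smul_right, Complex.conj_ofReal, ← mul_assoc,
      ← Complex.ofReal_mul]
    congr 2
    rw [pow_add, div_eq_mul_inv, ← hs]
    ring
  · rw [if_neg hE]
    refine Finset.sum_eq_zero fun F _ => ?_
    by_cases hF : F = E
    · subst hF
      simp [hE]
    · simp [hF]

end
end

section
/- Let Ω be a type and let D : Set Ω → Set Ω → ℂ satisfy: (Hermiticity) D A B = conj (D B A) for all A, B; and (additivity) for all disjoint A, B and all C, D (A ∪ B) C = D A C + D B C. Define μ A := (D A A).re. Then for all pairwise disjoint X, Y, Z ⊆ Ω, the third-level interference term vanishes: μ(X ∪ Y ∪ Z) − μ(X ∪ Y) − μ(Y ∪ Z) − μ(Z ∪ X) + μ(X) + μ(Y) + μ(Z) = 0. (This is the paper's claim that any measure arising from a decoherence functional is a level 2 (quantum) measure, i.e. satisfies the sum rule I₃ = 0.) -/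
open ComplexConjugate

/-- Any measure arising from a decoherence functional (Hermitian and additive on disjoint
unions) is a level 2 (quantum) measure: the third interference term `I₃` vanishes for
pairwise disjoint events. -/
theorem decoherence_measure_is_level_two {Ω : Type*} (D : Set Ω → Set Ω → ℂ)
    (hherm : ∀ A B : Set Ω, D A B = conj (D B A))
    (hadd : ∀ A B C : Set Ω, Disjoint A B → D (A ∪ B) C = D A C + D B C)
    (X Y Z : Set Ω) (hXY : Disjoint X Y) (hYZ : Disjoint Y Z) (hXZ : Disjoint X Z) :
    (D (X ∪ Y ∪ Z) (X ∪ Y ∪ Z)).re - (D (X ∪ Y) (X ∪ Y)).re - (D (Y ∪ Z) (Y ∪ Z)).re -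
        (D (Z ∪ X) (Z ∪ X)).re + (D X X).re + (D Y Y).re + (D Z Z).re = 0 := by
  have hadd2 : ∀ A B C : Set Ω, Disjoint A B → D C (A ∪ B) = D C A + D C B := by
    intro A B C h
    rw [hherm C (A ∪ B), hadd A B C h, map_add, ← hherm C A, ← hherm C B]
  have hU : Disjoint (X ∪ Y) Z := Set.disjoint_union_left.mpr ⟨hXZ, hYZ⟩
  simp only [hadd _ _ _ hU, hadd2 _ _ _ hU, hadd _ _ _ hXY, hadd2 _ _ _ hXY,
    hadd _ _ _ hYZ, hadd2 _ _ _ hYZ, hadd _ _ _ hXZ.symm, hadd2 _ _ _ hXZ.symm,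
    Complex.add_re]
  ring
end
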